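/- Let s ≥ 1 be an integer, let a₁, …, a_s be integers with 1 = a₁ ≤ a₂ ≤ … ≤ a_s ≤ 2s+1, and let k be an integer with 0 ≤ k ≤ 2s such that for all 1 ≤ i ≤ s, k ≢ a_i − 1 − i (mod 2s+1) and k ≢ a_i + s − i (mod 2s+1). Suppose k < a₁ + s − 1. Then the set R = {i : 1 ≤ i ≤ s and k > a_i − 1 − i} is nonempty; let r = max R. Moreover: (i) for every 1 ≤ i ≤ r, a_i − 1 < k + i < a_i + s; (ii) for every r+1 ≤ i ≤ s, a_i − 1 − (2s+1) < k + i − s < a_i + s − (2s+1); consequently, for every i, the vertex of Z_{2s+1} represented by k+i (if i ≤ r) or by k+i−s (if i > r) lies in V_i = {a_i, a_i+1, …, a_i+s−1} (mod 2s+1), and the union {k+i−s : r+1 ≤ i ≤ s} ∪ {k+i : 1 ≤ i ≤ r} (mod 2s+1) consists of s consecutive vertices on C_{2s+1}. -/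

import Mathlib

/-!
The argument is a discrete intermediate value principle: since `a` is monotone, `k + i - a_i - c`
rises by at most one per step, so if it never vanishes it cannot pass from negative to positive.
The congruence conditions exclude the value `0` for `c = -1`, `c = s` and `c = s - (2s+1)`.

* `c = s`: negative at the first index, hence everywhere; this is the upper bound in (i).
* `c = -1`: positive at `r`, hence at every `i ≤ r`; this is the lower bound in (i). Beyond `r` it
  is negative by maximality of `r`; this is the upper bound in (ii).
* `c = s - (2s+1)`: nonnegative at the last index, hence positive everywhere; this is the lower
  bound in (ii).

The selected integers `k + i - s` for `i > r` run from `k + r + 1 - s` to `k`, and the `k + i` for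
`i ≤ r` continue from `k + 1` to `k + r`.
-/

section DiscreteIntermediateValue

theorem neg_of_neg_of_le_of_succ_le {ι : Type*} [Preorder ι] [SuccOrder ι]
    [IsSuccArchimedean ι] {f : ι → ℤ} (hstep : ∀ i, f (Order.succ i) ≤ f i + 1)
    (hne : ∀ i, f i ≠ 0) {i j : ι} (hij : i ≤ j) (hi : f i < 0) : f j < 0 := by
  induction hij using Succ.rec with
  | rfl => exact hi
  | succ n _ ih => have := hstep n; have := hne (Order.succ n); omega

theorem val_orderSucc_le_add_one {n : ℕ} (i : Fin n) : ((Order.succ i : Fin n) : ℕ) ≤ i + 1 := by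
  by_contra! h
  have hlt : i < ⟨i + 1, h.trans (Order.succ i).isLt⟩ := Fin.lt_def.2 (Nat.lt_succ_self i)
  exact (Fin.lt_def.1 (h : (⟨i + 1, _⟩ : Fin n) < Order.succ i)).not_ge (Order.succ_le_of_lt hlt)

variable {s : ℕ} {a : Fin s → ℤ} {d : ℤ} {i j : Fin s}

theorem val_add_lt_of_monotone (hmono : Monotone a) (hne : ∀ i : Fin s, (i : ℕ) + d ≠ a i)
    (hij : i ≤ j) (hi : (i : ℕ) + d < a i) : (j : ℕ) + d < a j := by
  have hstep (l : Fin s) :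
      ((Order.succ l : Fin s) : ℕ) + d - a (Order.succ l) ≤ (l : ℕ) + d - a l + 1 := by
    have := val_orderSucc_le_add_one l
    have := hmono (Order.le_succ l)
    omega
  exact sub_neg.1 <| neg_of_neg_of_le_of_succ_le (f := fun l : Fin s => (l : ℕ) + d - a l) hstep
    (fun l => sub_ne_zero.2 (hne l)) hij (sub_neg.2 hi)

theorem lt_val_add_of_monotone (hmono : Monotone a) (hne : ∀ i : Fin s, (i : ℕ) + d ≠ a i)
    (hij : i ≤ j) (hj : a j < (j : ℕ) + d) : a i < (i : ℕ) + d := by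
  contrapose! hj
  exact (val_add_lt_of_monotone hmono hne hij (lt_of_le_of_ne hj (hne i))).le

end DiscreteIntermediateValue

section ConsecutiveVertices

/-- The `s` consecutive vertices `c, c + 1, …, c + s - 1` of the cycle on `ZMod m`. -/
def consecutiveVertices (m s : ℕ) (c : ZMod m) : Finset (ZMod m) :=
  Finset.univ.image fun t : Fin s => c + ((t : ℕ) : ZMod m)

theorem consecutiveVertices_intCast (m s : ℕ) (x : ℤ) :
    consecutiveVertices m s x = (Finset.Ico x (x + s)).image (Int.cast : ℤ → ZMod m) := by
  ext v
  simp only [consecutiveVertices, Finset.mem_image, Finset.mem_univ, true_and, Finset.mem_Ico]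
  constructor
  · rintro ⟨t, rfl⟩
    exact ⟨x + (t : ℕ), by omega, by push_cast; rfl⟩
  · rintro ⟨y, ⟨hxy, hys⟩, rfl⟩
    obtain ⟨t, rfl⟩ := Int.le.dest hxy
    exact ⟨⟨t, by omega⟩, by push_cast; rfl⟩

theorem intCast_mem_consecutiveVertices {m s : ℕ} {x y : ℤ} (hxy : x ≤ y) (hys : y < x + s) :
    (y : ZMod m) ∈ consecutiveVertices m s x := by
  rw [consecutiveVertices_intCast]
  exact Finset.mem_image_of_mem _ (Finset.mem_Ico.2 ⟨hxy, hys⟩)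

theorem intCast_mem_consecutiveVertices_of_sub {m s : ℕ} {x y : ℤ} (hxy : x - m ≤ y)
    (hys : y < x + s - m) : (y : ZMod m) ∈ consecutiveVertices m s x := by
  simpa using intCast_mem_consecutiveVertices (m := m) hxy (by omega : y < x - m + s)

end ConsecutiveVertices

section Selection

variable {s : ℕ}

/-- The integer representing the vertex selected from the `i`-th arc: `k + i` up to the index `r`
and `k + i - s` beyond it, where `i : Fin s` stands for the one-based index `i + 1`. -/
def selected (k : ℤ) (r i : Fin s) : ℤ :=
  if i ≤ r then k + ((i : ℕ) + 1) else k + ((i : ℕ) + 1) - s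

theorem selected_injective (k : ℤ) (r : Fin s) : Function.Injective (selected k r) := by
  intro i j hij
  simp only [selected, Fin.le_def] at hij
  apply Fin.ext
  split_ifs at hij <;> omega

-- `r` is zero-based, so `k + r + 1 - s` for the one-based index reads `k + r + 2 - s` here.
theorem image_selected (k : ℤ) (r : Fin s) :
    Finset.univ.image (selected k r) =
      Finset.Ico (k + (r : ℕ) + 2 - s) (k + (r : ℕ) + 2 - s + s) := by
  apply Finset.eq_of_subset_of_card_le
  · simp only [Finset.image_subset_iff, Finset.mem_univ, true_imp_iff, Finset.mem_Ico, selected,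
      Fin.le_def]
    intro i
    split_ifs <;> omega
  · rw [Finset.card_image_of_injective _ (selected_injective k r)]
    simp

theorem image_intCast_selected (m : ℕ) (k : ℤ) (r : Fin s) :
    Finset.univ.image (fun i => (selected k r i : ZMod m)) =
      consecutiveVertices m s (k + (r : ℕ) + 2 - s : ℤ) := by
  rw [consecutiveVertices_intCast, ← image_selected, Finset.image_image]
  rfl

theorem selected_mem_consecutiveVertices {m : ℕ} {k x : ℤ} {r i : Fin s}
    (hle : i ≤ r → x - 1 < k + ((i : ℕ) + 1) ∧ k + ((i : ℕ) + 1) < x + s)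
    (hgt : r < i → x - 1 - m < k + ((i : ℕ) + 1) - s ∧ k + ((i : ℕ) + 1) - s < x + s - m) :
    (selected k r i : ZMod m) ∈ consecutiveVertices m s x := by
  unfold selected
  split_ifs with hir
  · obtain ⟨hlow, hupp⟩ := hle hir
    exact intCast_mem_consecutiveVertices (by omega) hupp
  · obtain ⟨hlow, hupp⟩ := hgt (not_le.1 hir)
    exact intCast_mem_consecutiveVertices_of_sub (by omega) hupp

end Selection

section Bounds

theorem add_ne_add_mul_of_not_modEq {m k x d : ℤ} (h : ¬ k ≡ x - d [ZMOD m]) (z : ℤ) :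
    k + d ≠ x + m * z := fun heq =>
  h (Int.modEq_iff_add_fac.2 ⟨-z, by linear_combination -heq⟩)

variable {s : ℕ} {a : Fin s → ℤ} {k : ℤ} {r i : Fin s}

theorem add_index_bounds_of_le (hmono : Monotone a)
    (hne_low : ∀ i : Fin s, k + ((i : ℕ) + 1) ≠ a i - 1)
    (hne_upp : ∀ i : Fin s, k + ((i : ℕ) + 1) ≠ a i + s)
    {i₀ : Fin s} (hi₀ : i₀ ≤ i) (hfirst : k + ((i₀ : ℕ) + 1) < a i₀ + s)
    (hr : a r - 1 - ((r : ℕ) + 1) < k) (hir : i ≤ r) :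
    a i - 1 < k + ((i : ℕ) + 1) ∧ k + ((i : ℕ) + 1) < a i + s := by
  have hlow : a i < (i : ℕ) + (k + 2) := lt_val_add_of_monotone hmono
    (fun j => by have := hne_low j; omega) hir (by omega)
  have hupp : (i : ℕ) + (k + 1 - s) < a i := val_add_lt_of_monotone hmono
    (fun j => by have := hne_upp j; omega) hi₀ (by omega)
  omega

theorem add_index_sub_bounds_of_lt (hmono : Monotone a)
    (hne_low : ∀ i : Fin s, k + ((i : ℕ) + 1) ≠ a i - 1)
    (hne_wrap : ∀ i : Fin s, k + ((i : ℕ) + 1) ≠ a i + s - (2 * s + 1))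
    {i₁ : Fin s} (hi₁ : i ≤ i₁) (hlast : a i₁ + s - (2 * s + 1) ≤ k + ((i₁ : ℕ) + 1))
    (hr : r ∈ upperBounds {i : Fin s | a i - 1 - ((i : ℕ) + 1) < k}) (hri : r < i) :
    a i - 1 - (2 * s + 1) < k + ((i : ℕ) + 1) - s ∧
      k + ((i : ℕ) + 1) - s < a i + s - (2 * s + 1) := by
  have hlow : a i < (i : ℕ) + (k + s + 2) := lt_val_add_of_monotone hmono
    (fun j => by have := hne_wrap j; omega) hi₁ (by have := hne_wrap i₁; omega)
  have hupp : k ≤ a i - 1 - ((i : ℕ) + 1) := not_lt.1 fun hi => (hr hi).not_gt hri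
  have := hne_low i
  omega

end Bounds

/-- Case 1 of the proof of Theorem 2. Let `1 = a₁ ≤ … ≤ a_s ≤ 2s+1`, and let
`0 ≤ k ≤ 2s` be incongruent mod `2s+1` to every `a_i - 1 - i` and every
`a_i + s - i`.  Assume `k < a₁ + s - 1`.  Then the set
`R = {i : k > a_i - 1 - i}` is nonempty; with `r = max R`:
(i) for `i ≤ r`, `a_i - 1 < k + i < a_i + s`;
(ii) for `i > r`, `a_i - 1 - (2s+1) < k + i - s < a_i + s - (2s+1)`;
consequently each selected vertex (`k+i` for `i ≤ r`, `k+i-s` for `i > r`,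
read in `ZMod (2s+1)`) lies in `V_i = {a_i, …, a_i + s - 1}`, and together the
selected vertices form `s` consecutive vertices on `C_{2s+1}`.
(Index `i : Fin s` represents `i+1`.) -/
theorem theorem2_case1
    (s : ℕ) (hs : 1 ≤ s) (a : Fin s → ℤ) (hmono : Monotone a)
    (hfirst : a ⟨0, hs⟩ = 1) (hlast : a ⟨s - 1, by omega⟩ ≤ 2 * s + 1)
    (k : ℤ) (hk0 : 0 ≤ k) (hk2 : k ≤ 2 * s)
    (hcong : ∀ i : Fin s,
      ¬ (k ≡ a i - 1 - ((i : ℕ) + 1) [ZMOD (2 * s + 1)]) ∧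
      ¬ (k ≡ a i + s - ((i : ℕ) + 1) [ZMOD (2 * s + 1)]))
    (hcase : k < a ⟨0, hs⟩ + s - 1) :
    ∃ hR : (Finset.filter (fun i : Fin s => a i - 1 - ((i : ℕ) + 1) < k)
        Finset.univ).Nonempty,
      let r := (Finset.filter (fun i : Fin s => a i - 1 - ((i : ℕ) + 1) < k)
        Finset.univ).max' hR
      (∀ i : Fin s, i ≤ r →
          a i - 1 < k + ((i : ℕ) + 1) ∧ k + ((i : ℕ) + 1) < a i + s) ∧
      (∀ i : Fin s, r < i →
          a i - 1 - (2 * s + 1) < k + ((i : ℕ) + 1) - s ∧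
          k + ((i : ℕ) + 1) - s < a i + s - (2 * s + 1)) ∧
      (∀ i : Fin s,
          (if i ≤ r then ((k + ((i : ℕ) + 1) : ℤ) : ZMod (2 * s + 1))
            else ((k + ((i : ℕ) + 1) - s : ℤ) : ZMod (2 * s + 1))) ∈
            Finset.image
              (fun t : Fin s => ((a i : ZMod (2 * s + 1)) + ((t : ℕ) : ZMod (2 * s + 1))))
              Finset.univ) ∧
      (∃ c : ZMod (2 * s + 1),
          Finset.image
            (fun i : Fin s =>
              if i ≤ r then ((k + ((i : ℕ) + 1) : ℤ) : ZMod (2 * s + 1))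
              else ((k + ((i : ℕ) + 1) - s : ℤ) : ZMod (2 * s + 1)))
            Finset.univ =
          Finset.image (fun t : Fin s => c + ((t : ℕ) : ZMod (2 * s + 1)))
            Finset.univ) := by
  have hne_low (i : Fin s) : k + ((i : ℕ) + 1) ≠ a i - 1 := by
    simpa using add_ne_add_mul_of_not_modEq (hcong i).1 0
  have hne_upp (i : Fin s) : k + ((i : ℕ) + 1) ≠ a i + s := by
    simpa using add_ne_add_mul_of_not_modEq (hcong i).2 0
  have hne_wrap (i : Fin s) : k + ((i : ℕ) + 1) ≠ a i + s - (2 * s + 1) := by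
    simpa [sub_eq_add_neg] using add_ne_add_mul_of_not_modEq (hcong i).2 (-1)
  refine ⟨⟨⟨0, hs⟩, Finset.mem_filter.2 ⟨Finset.mem_univ _, by simp only; omega⟩⟩, ?_⟩
  intro r
  have hr : IsGreatest {i : Fin s | a i - 1 - ((i : ℕ) + 1) < k} r := by
    rw [← Finset.coe_filter_univ]
    exact Finset.isGreatest_max' _ _
  have hle (i : Fin s) (hir : i ≤ r) := add_index_bounds_of_le hmono hne_low hne_upp
    (i₀ := ⟨0, hs⟩) (Nat.zero_le i) (by simp only; omega) hr.1 hir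
  have hgt (i : Fin s) (hri : r < i) := add_index_sub_bounds_of_lt hmono hne_low hne_wrap
    (i₁ := ⟨s - 1, by omega⟩) (Nat.le_pred_of_lt i.isLt) (by simp only; omega) hr.2 hri
  simp only [← apply_ite (Int.cast : ℤ → ZMod (2 * s + 1))]
  exact ⟨hle, hgt,
    fun i => selected_mem_consecutiveVertices (hle i) (by exact_mod_cast hgt i),
    _, image_intCast_selected _ k r⟩
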